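/- Let 𝓔 be a set of domains, H a hypothesis class, L a loss function, and γ ∈ (0,1). Suppose H shatters, with respect to L and γ, a finite set C ⊆ 𝓔 of size 2m, and let D be the uniform probability distribution on C. Then for every subset S ⊆ C with |S| = m there exists h_S ∈ H such that (1/m)Σ_{e∈S} 𝟙_{L,γ}(h_S,e) = 0 while E_{e∼D}[𝟙_{L,γ}(h_S,e)] = 1/2. Consequently, for every ε < 1/2 and δ < 1, H does not satisfy the uniform convergence guarantee at sample size m: it is not the case that for every i.i.d. sample S of m domains from D, with probability at least 1−δ, all h ∈ H have |E_{e∼D}[𝟙_{L,γ}(h,e)] − (1/m)Σ_{e∈S}𝟙_{L,γ}(h,e)| ≤ ε. -/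

import Mathlib

open MeasureTheory Set
open scoped ENNReal NNReal

/-!
Given a sample `S` of `n` points of a shattered set `C`, shattering provides a hypothesis whose
indicator vanishes on the sampled points and equals `1` on all other points of `C`. Its empirical
average is `0` and its expectation is at least `1 - n / #C`, which is `1 / 2` when `n` is half the
size of `C`. Since a sample drawn from `C` almost surely stays in `C`, representative samples form
a null set, not merely a set of small probability.
-/

section Shattering

open ProbabilityTheory

/-- Shattering of a finite set `C` of domains, for a family `f` standing for the performance
indicators `𝟙_{L,γ}`. Only the values on `C` are constrained: elsewhere `f` may be any real-valued
family. -/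
def Shatters {ℰ H : Type*} (f : H → ℰ → ℝ) (C : Finset ℰ) : Prop :=
  ∀ C' : Finset ℰ, C' ⊆ C → ∃ h : H, (∀ e ∈ C', f h e = 1) ∧ ∀ e ∈ C, e ∉ C' → f h e = 0

/-- The sample `S` is `ε`-representative for the family `f` with respect to `μ`: simultaneously
for all hypotheses, the empirical average on `S` is within `ε` of the expectation. -/
def IsRepresentative {ℰ H : Type*} [MeasurableSpace ℰ] (μ : Measure ℰ) (f : H → ℰ → ℝ) (ε : ℝ)
    {n : ℕ} (S : Fin n → ℰ) : Prop :=
  ∀ h : H, |(∫ e, f h e ∂μ) - 1 / (n : ℝ) * ∑ i, f h (S i)| ≤ ε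

variable {ℰ H : Type*} [MeasurableSpace ℰ] [MeasurableSingletonClass ℰ]

theorem uniformOn_coe_finset (C : Finset ℰ) :
    uniformOn (C : Set ℰ) = (C.card : ℝ≥0∞)⁻¹ • ∑ e ∈ C, Measure.dirac e := by
  classical
  ext t _
  have count_inter : Measure.count ((C : Set ℰ) ∩ t) = ∑ e ∈ C, Measure.dirac e t := by
    have inter_eq : (C : Set ℰ) ∩ t = ({e ∈ C | e ∈ t} : Finset ℰ) := by simp [Set.inter_def]
    rw [inter_eq, Measure.count_apply_finset]
    simp [Set.indicator_apply]
  rw [uniformOn, cond_apply C.measurableSet, Measure.count_apply_finset, count_inter,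
    Measure.smul_apply, Measure.finsetSum_apply, smul_eq_mul]

theorem integral_uniformOn_coe_finset {E : Type*} [NormedAddCommGroup E] [NormedSpace ℝ E]
    [CompleteSpace E] (C : Finset ℰ) (f : ℰ → E) :
    ∫ e, f e ∂uniformOn (C : Set ℰ) = (C.card : ℝ)⁻¹ • ∑ e ∈ C, f e := by
  rw [uniformOn_coe_finset, integral_smul_measure,
    integral_finsetSum_measure fun e _ => integrable_dirac (by simp)]
  simp [integral_dirac]

theorem ae_pi_uniformOn_mem {ι : Type*} [Fintype ι] {s : Set ℰ} (hs : s.Finite)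
    (hne : s.Nonempty) : ∀ᵐ S ∂Measure.pi fun _ : ι => uniformOn s, ∀ i, S i ∈ s := by
  have := isProbabilityMeasure_uniformOn hs hne
  have mem : ∀ᵐ e ∂uniformOn s, e ∈ s := ae_cond_mem hs.measurableSet
  exact ae_all_iff.2 fun _ => Measure.tendsto_eval_ae_ae.eventually mem

variable {f : H → ℰ → ℝ} {C : Finset ℰ}

theorem Shatters.exists_eq_zero_and_integral_eq (hf : Shatters f C) (hne : C.Nonempty)
    {S : Finset ℰ} (hS : S ⊆ C) :
    ∃ h : H, (∀ e ∈ S, f h e = 0) ∧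
      ∫ e, f h e ∂uniformOn (C : Set ℰ) = 1 - (S.card : ℝ) / C.card := by
  classical
  obtain ⟨h, one_off, zero_outside⟩ := hf (C \ S) Finset.sdiff_subset
  have zero_on : ∀ e ∈ S, f h e = 0 := fun e he => zero_outside e (hS he) (by simp [he])
  have sum_eq : ∑ e ∈ C, f h e = C.card - S.card := by
    rw [← Finset.sum_sdiff hS, Finset.sum_eq_zero zero_on, Finset.sum_congr rfl one_off, add_zero,
      Finset.sum_const, nsmul_one, Finset.cast_card_sdiff hS]
  have card_ne_zero : (C.card : ℝ) ≠ 0 := by exact_mod_cast hne.card_ne_zero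
  refine ⟨h, zero_on, ?_⟩
  rw [integral_uniformOn_coe_finset, sum_eq, smul_eq_mul]
  field_simp

theorem Shatters.not_isRepresentative (hf : Shatters f C) (hne : C.Nonempty) {n : ℕ}
    {ε : ℝ} (hε : ε < 1 - (n : ℝ) / C.card) {S : Fin n → ℰ} (hS : ∀ i, S i ∈ C) :
    ¬ IsRepresentative (uniformOn (C : Set ℰ)) f ε S := by
  classical
  intro representative
  obtain ⟨h, zero_on, integral_eq⟩ :=
    hf.exists_eq_zero_and_integral_eq hne (S := Finset.univ.image S)
      (Finset.image_subset_iff.2 fun i _ => hS i)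
  have empirical_eq_zero : ∑ i, f h (S i) = 0 :=
    Finset.sum_eq_zero fun i hi => zero_on _ (Finset.mem_image_of_mem S hi)
  have card_image_le : ((Finset.univ.image S).card : ℝ) ≤ n := by
    exact_mod_cast Finset.card_image_le.trans_eq (Finset.card_fin n)
  refine lt_irrefl ε ?_
  calc
    ε < 1 - (n : ℝ) / C.card := hε
    _ ≤ 1 - ((Finset.univ.image S).card : ℝ) / C.card := by gcongr
    _ = (∫ e, f h e ∂uniformOn (C : Set ℰ)) - 1 / (n : ℝ) * ∑ i, f h (S i) := by
      rw [integral_eq, empirical_eq_zero, mul_zero, sub_zero]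
    _ ≤ ε := (le_abs_self _).trans (representative h)

theorem shattering_uniform_failure_general (hf : Shatters f C) (hne : C.Nonempty) :
    (∀ S ⊆ C, ∃ h : H, (∀ e ∈ S, f h e = 0) ∧
      ∫ e, f h e ∂uniformOn (C : Set ℰ) = 1 - (S.card : ℝ) / C.card) ∧
    ∀ (n : ℕ) (ε : ℝ), ε < 1 - (n : ℝ) / C.card →
      (Measure.pi fun _ : Fin n => uniformOn (C : Set ℰ))
        {S | IsRepresentative (uniformOn (C : Set ℰ)) f ε S} = 0 := by
  refine ⟨fun S hS => hf.exists_eq_zero_and_integral_eq hne hS,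
    fun n ε hε => measure_eq_zero_iff_ae_notMem.2 ?_⟩
  filter_upwards [ae_pi_uniformOn_mem C.finite_toSet hne] with S hS
  exact hf.not_isRepresentative hne hε hS

end Shattering

/-- If `H` shatters (w.r.t. `L`, `γ`) a set `C` of `2m` domains, and `D` is the
uniform distribution on `C`, then for every `S ⊆ C` with `|S| = m` there is `h_S ∈ H` whose
empirical indicator average on `S` is `0` while its expected indicator under `D` is `1/2`.
Consequently, for every `ε < 1/2` and `δ < 1`, `H` fails the uniform convergence guarantee at
sample size `m`. -/
theorem shattering_uniform_failure
    {ℰ : Type*} [MeasurableSpace ℰ] [MeasurableSingletonClass ℰ]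
    {H : Type*}
    (L : H → ℰ → ℝ) (γ : ℝ) (hγ : γ ∈ Set.Ioo (0 : ℝ) 1)
    -- the performance indicator 𝟙_{L,γ}(h,e)
    (ind : H → ℰ → ℝ)
    (hind : ∀ h e, ind h e = if γ ≤ L h e then 1 else 0)
    (hmeas : ∀ h : H, Measurable fun e => ind h e)
    (m : ℕ) (hm : 0 < m)
    (C : Finset ℰ) (hC : C.card = 2 * m)
    -- `H` shatters `C` with respect to `L`, `γ`
    (hshat : ∀ C' : Finset ℰ, C' ⊆ C → ∃ h : H,
      (∀ e ∈ C', ind h e = 1) ∧ (∀ e ∈ C, e ∉ C' → ind h e = 0))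
    -- `D` is the uniform probability distribution on `C`
    (D : Measure ℰ)
    (hD : D = ((C.card : ℝ≥0∞))⁻¹ • ∑ e ∈ C, Measure.dirac e) :
    -- first conclusion: for every `S ⊆ C` of size `m` there is a bad hypothesis `h_S`
    (∀ S : Finset ℰ, S ⊆ C → S.card = m → ∃ hS : H,
      (1 / (m : ℝ)) * ∑ e ∈ S, ind hS e = 0 ∧ (∫ e, ind hS e ∂D) = 1 / 2) ∧
    -- consequently: uniform convergence fails at sample size `m`
    ∀ ε δ : ℝ, ε < 1 / 2 → δ < 1 →
      ¬ (ENNReal.ofReal (1 - δ) ≤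
          (Measure.pi fun _ : Fin m => D)
            {S : Fin m → ℰ | ∀ h : H,
              abs ((∫ e, ind h e ∂D) - (1 / (m : ℝ)) * ∑ i, ind h (S i)) ≤ ε}) := by
  have hne : C.Nonempty := Finset.card_pos.1 (by omega)
  have half : 1 - (m : ℝ) / C.card = 1 / 2 := by
    rw [hC]
    push_cast
    field_simp
    norm_num
  obtain rfl := hD.trans (uniformOn_coe_finset C).symm
  obtain ⟨exists_bad, representative_null⟩ := shattering_uniform_failure_general hshat hne
  refine ⟨fun S hS hSm => ?_, fun ε δ hε hδ hle => ?_⟩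
  · obtain ⟨h, zero_on, integral_eq⟩ := exists_bad S hS
    exact ⟨h, by rw [Finset.sum_eq_zero zero_on, mul_zero], by rw [integral_eq, hSm, half]⟩
  · have null := representative_null m ε (half ▸ hε)
    exact (ENNReal.ofReal_pos.2 (sub_pos.2 hδ)).not_ge (hle.trans null.le)
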